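/- (Existence and monotonicity for the discretised minimisation programs.) Under Assumption (A), fix finite nonnegative Borel measures μ_1, μ_2, … on [2b(0),∞), let U_n (n ∈ ℕ) be the cone of measures Σ_{i=1}^n a_i μ_i with a_i ≥ 0, and let U_∞ be the closure of ∪_n U_n in the vague topology. For n ∈ ℕ ∪ {∞} let p_{2,n} := inf{ ∫ g dμ : μ ∈ U_n and r_μ(t,b(t)) ≥ 1 for all t ∈ (0,t0] }. Assume there exists C > 0 such that C·μ_1 satisfies r_{C·μ_1}(t,b(t)) ≥ 1 for all t ∈ (0,t0]. Then for every n ∈ ℕ ∪ {∞} the infimum p_{2,n} is attained by some feasible μ*_{2,n} ∈ U_n, and p_{2,n} ≤ C·∫ g dμ_1; moreover, for m ≤ n the measure μ*_{2,m} is feasible for the n-th program and p_{2,m} ≥ p_{2,n}. -/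

import Mathlib

open MeasureTheory Set Filter
open scoped ENNReal NNReal Topology

noncomputable def rTheta (θ t x : ℝ) : ℝ := Real.exp (-θ ^ 2 / (2 * t) + θ * x / t)

noncomputable def rMu (μ : Measure ℝ) (t x : ℝ) : ℝ≥0∞ :=
  ∫⁻ θ, ENNReal.ofReal (rTheta θ t x) ∂μ

/-- The positive cone `U_n` generated by the measures `μ_1 = μs 0, …, μ_n = μs (n-1)`. -/
def coneU (μs : ℕ → Measure ℝ) (n : ℕ) : Set (Measure ℝ) :=
  {μ | ∃ a : ℕ → ℝ≥0, μ = ∑ i ∈ Finset.range n, a i • μs i}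

/-- The vague topology on measures on `ℝ`: the coarsest topology making
`μ ↦ ∫ f dμ` continuous for every continuous compactly supported `f`. -/
noncomputable def vagueTop : TopologicalSpace (Measure ℝ) :=
  ⨅ (f : ℝ → ℝ) (_ : Continuous f) (_ : HasCompactSupport f),
    TopologicalSpace.induced (fun μ : Measure ℝ => ∫ x, f x ∂μ) inferInstance

/-- `U_∞`: the vague closure of `⋃ n, U_n`. -/
noncomputable def coneUInf (μs : ℕ → Measure ℝ) : Set (Measure ℝ) :=
  @closure _ vagueTop (⋃ n, coneU μs n)

/-- Feasible measures of the minimisation program restricted to `U`. -/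
def feasSet (b : ℝ → ℝ) (t0 : ℝ) (U : Set (Measure ℝ)) : Set (Measure ℝ) :=
  {μ ∈ U | ∀ t ∈ Set.Ioc 0 t0, 1 ≤ rMu μ t (b t)}

/-- The objective `∫ g dμ` with `g θ = r_θ(t0, x0)`. -/
noncomputable def gInt (t0 x0 : ℝ) (μ : Measure ℝ) : ℝ≥0∞ :=
  ∫⁻ θ, ENNReal.ofReal (rTheta θ t0 x0) ∂μ

/-- The optimal value `p_{2,·}` of the minimisation program restricted to `U`. -/
noncomputable def pVal (b : ℝ → ℝ) (t0 x0 : ℝ) (U : Set (Measure ℝ)) : ℝ≥0∞ :=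
  ⨅ μ ∈ feasSet b t0 U, gInt t0 x0 μ

/-!
Since `g` is continuous and positive, the measures with `∫ g dμ ≤ M` form a vaguely compact set
(Riesz–Markov–Kakutani) on which `μ ↦ ∫ g dμ` is lower semicontinuous, so an optimiser exists as
soon as the constraints are closed there. For `t < t0` the function `θ ↦ r_θ(t, x)` is `o(g)` at
infinity, so that `r_μ(t, x)` is even continuous in `μ`. At `t = t0` this domination is lost, but
the constraint follows from the earlier ones by letting `t ↑ t0`: if `b(t) - b(t0) = O(√(t0 - t))`,
completing the square bounds `r_θ(t, b(t))` by a constant multiple of `r_θ(t0, b(t0))` for all `θ`.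
-/

open Asymptotics
open scoped CompactlySupported

theorem exists_compactlySupported_eqOn {X : Type*} [TopologicalSpace X] [R1Space X]
    [LocallyCompactSpace X] {f : X → ℝ}
    (hf : Continuous f) (hf0 : ∀ x, 0 ≤ f x) {K : Set X} (hK : IsCompact K) :
    ∃ φ : C_c(X, ℝ), EqOn φ f K ∧ ∀ x, 0 ≤ φ x ∧ φ x ≤ f x := by
  obtain ⟨χ, hχK, -, hχc, hχ⟩ :=
    exists_continuous_one_zero_of_isCompact hK isClosed_empty (disjoint_empty K)
  refine ⟨⟨⟨fun x => χ x * f x, χ.continuous.mul hf⟩, hχc.mul_right⟩, fun x hx => ?_, fun x => ?_⟩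
  · simp [hχK hx]
  · exact ⟨mul_nonneg (hχ x).1 (hf0 x), mul_le_of_le_one_left (hf0 x) (hχ x).2⟩

section VagueConvergence

variable {X ι : Type*} [TopologicalSpace X] [MeasurableSpace X] {m : ι → Measure X} {F : Filter ι}
  {μ ν : Measure X} {f g : X → ℝ}

/-- Vague convergence of a family of measures along a filter: the integrals of every continuous
compactly supported function converge. For measures on `ℝ` this is convergence in `vagueTop`,
see `tendsto_nhds_vagueTop_iff`. -/
def VagueTendsto (m : ι → Measure X) (F : Filter ι) (ν : Measure X) : Prop :=
  ∀ φ : C_c(X, ℝ), Tendsto (fun i => ∫ x, φ x ∂m i) F (𝓝 (∫ x, φ x ∂ν))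

theorem isFiniteMeasureOnCompacts_of_lintegral_ne_top [OpensMeasurableSpace X] (hg : Continuous g)
    (hpos : ∀ x, 0 < g x) (h : ∫⁻ x, ENNReal.ofReal (g x) ∂μ ≠ ⊤) :
    IsFiniteMeasureOnCompacts μ := by
  refine ⟨fun K hK => ?_⟩
  obtain ⟨ε, hε, hεg⟩ := hK.exists_forall_le' hg.continuousOn fun x _ => hpos x
  have hε' : ENNReal.ofReal ε ≠ 0 := by simpa using hε
  calc μ K ≤ μ {x | ENNReal.ofReal ε ≤ ENNReal.ofReal (g x)} :=
        measure_mono fun x hx => ENNReal.ofReal_le_ofReal (hεg x hx)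
    _ ≤ (∫⁻ x, ENNReal.ofReal (g x) ∂μ) / ENNReal.ofReal ε :=
        meas_ge_le_lintegral_div hg.measurable.ennreal_ofReal.aemeasurable hε'
          ENNReal.ofReal_ne_top
    _ < ⊤ := ENNReal.div_lt_top h hε'

theorem exists_enorm_integral_le_mul_lintegral (hg : Continuous g) (hpos : ∀ x, 0 < g x)
    (φ : C_c(X, ℝ)) :
    ∃ c : ℝ≥0, ∀ μ : Measure X, ‖∫ x, φ x ∂μ‖ₑ ≤ c * ∫⁻ x, ENNReal.ofReal (g x) ∂μ := by
  have hquot : HasCompactSupport fun x => φ x / g x := by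
    simp only [div_eq_mul_inv]
    exact φ.hasCompactSupport.mul_right
  obtain ⟨c, hc⟩ := hquot.exists_bound_of_continuous
    (φ.continuous.div hg fun x => (hpos x).ne')
  have hdom (x : X) : ‖φ x‖ₑ ≤ c.toNNReal * ENNReal.ofReal (g x) := by
    have hx := hc x
    rw [norm_div, Real.norm_of_nonneg (hpos x).le, div_le_iff₀ (hpos x)] at hx
    rw [← ofReal_norm, ← ENNReal.ofReal, ← ENNReal.ofReal_mul' (hpos x).le]
    exact ENNReal.ofReal_le_ofReal hx
  refine ⟨c.toNNReal, fun μ => ?_⟩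
  calc ‖∫ x, φ x ∂μ‖ₑ ≤ ∫⁻ x, ‖φ x‖ₑ ∂μ := enorm_integral_le_lintegral_enorm _
    _ ≤ ∫⁻ x, c.toNNReal * ENNReal.ofReal (g x) ∂μ := lintegral_mono hdom
    _ = c.toNNReal * ∫⁻ x, ENNReal.ofReal (g x) ∂μ := lintegral_const_mul' _ _ ENNReal.coe_ne_top

variable [BorelSpace X]

theorem exists_vagueTendsto_of_forall_exists_tendsto [T2Space X] [LocallyCompactSpace X] [F.NeBot]
    (hm : ∀ᶠ i in F, IsFiniteMeasureOnCompacts (m i))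
    (hlim : ∀ φ : C_c(X, ℝ), ∃ l, Tendsto (fun i => ∫ x, φ x ∂m i) F (𝓝 l)) :
    ∃ ν : Measure X, IsFiniteMeasureOnCompacts ν ∧ VagueTendsto m F ν := by
  choose L hL using hlim
  let Λ : C_c(X, ℝ) →ₗ[ℝ] ℝ :=
    { toFun := L
      map_add' φ ψ := by
        refine tendsto_nhds_unique_of_eventuallyEq (hL (φ + ψ)) ((hL φ).add (hL ψ)) ?_
        filter_upwards [hm] with i _
        exact integral_add φ.integrable ψ.integrable
      map_smul' c φ :=
        tendsto_nhds_unique (hL (c • φ)) <|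
          ((hL φ).const_mul c).congr fun i => (integral_const_mul c φ).symm }
  let Λ' : C_c(X, ℝ) →ₚ[ℝ] ℝ :=
    PositiveLinearMap.mk₀ Λ fun φ hφ => ge_of_tendsto' (hL φ) fun i => integral_nonneg hφ
  refine ⟨RealRMK.rieszMeasure Λ', inferInstance, fun φ => ?_⟩
  rw [RealRMK.integral_rieszMeasure Λ' φ]
  exact hL φ

theorem exists_vagueTendsto_of_lintegral_le [T2Space X] [LocallyCompactSpace X]
    (hg : Continuous g) (hpos : ∀ x, 0 < g x) (F : Ultrafilter ι) {M : ℝ≥0}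
    (hM : ∀ᶠ i in (F : Filter ι), ∫⁻ x, ENNReal.ofReal (g x) ∂m i ≤ M) :
    ∃ ν : Measure X, IsFiniteMeasureOnCompacts ν ∧ VagueTendsto m F ν := by
  refine exists_vagueTendsto_of_forall_exists_tendsto ?_ fun φ => ?_
  · filter_upwards [hM] with i hi
    exact isFiniteMeasureOnCompacts_of_lintegral_ne_top hg hpos
      (ne_top_of_le_ne_top ENNReal.coe_ne_top hi)
  · obtain ⟨c, hc⟩ := exists_enorm_integral_le_mul_lintegral hg hpos φ
    have hball : ∀ᶠ i in (F : Filter ι), ∫ x, φ x ∂m i ∈ Metric.closedBall 0 (c * M : ℝ≥0) := by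
      filter_upwards [hM] with i hi
      rw [mem_closedBall_zero_iff, ← coe_nnnorm, NNReal.coe_le_coe, ← ENNReal.coe_le_coe]
      exact (hc (m i)).trans (by push_cast; gcongr)
    obtain ⟨l, -, hl⟩ := (isCompact_closedBall (0 : ℝ) _).ultrafilter_le_nhds'
      (F.map fun i => ∫ x, φ x ∂m i) hball
    exact ⟨l, hl⟩

namespace VagueTendsto

variable [IsFiniteMeasureOnCompacts ν]

theorem lintegral_ofReal (h : VagueTendsto m F ν)
    (hm : ∀ᶠ i in F, IsFiniteMeasureOnCompacts (m i)) {φ : C_c(X, ℝ)} (hφ : ∀ x, 0 ≤ φ x) :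
    Tendsto (fun i => ∫⁻ x, ENNReal.ofReal (φ x) ∂m i) F
      (𝓝 (∫⁻ x, ENNReal.ofReal (φ x) ∂ν)) := by
  rw [← ofReal_integral_eq_lintegral_ofReal φ.integrable (ae_of_all _ hφ)]
  refine (ENNReal.tendsto_ofReal (h φ)).congr' ?_
  filter_upwards [hm] with i _
  exact ofReal_integral_eq_lintegral_ofReal φ.integrable (ae_of_all _ hφ)

variable [T2Space X] [LocallyCompactSpace X] [F.NeBot]

theorem limsup_lintegral_le_add (h : VagueTendsto m F ν)
    (hm : ∀ᶠ i in F, IsFiniteMeasureOnCompacts (m i)) (hf : Continuous f) (hf0 : ∀ x, 0 ≤ f x)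
    (hg0 : ∀ x, 0 ≤ g x) (hfg : f =o[cocompact X] g) {M : ℝ≥0}
    (hM : ∀ᶠ i in F, ∫⁻ x, ENNReal.ofReal (g x) ∂m i ≤ M) {ε : ℝ≥0} (hε : 0 < ε) :
    limsup (fun i => ∫⁻ x, ENNReal.ofReal (f x) ∂m i) F
      ≤ ∫⁻ x, ENNReal.ofReal (f x) ∂ν + ε * M := by
  obtain ⟨K, hK, hKf⟩ := mem_cocompact.1 (hfg.bound hε)
  obtain ⟨φ, hφf, hφ⟩ := exists_compactlySupported_eqOn hf hf0 hK
  have hsplit (x : X) :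
      ENNReal.ofReal (f x) ≤ ENNReal.ofReal (φ x) + ε * ENNReal.ofReal (g x) := by
    by_cases hx : x ∈ K
    · rw [hφf hx]
      exact le_self_add
    · have hle : ‖f x‖ ≤ ε * ‖g x‖ := hKf hx
      rw [Real.norm_of_nonneg (hf0 x), Real.norm_of_nonneg (hg0 x)] at hle
      rw [← ENNReal.ofReal_coe_nnreal, ← ENNReal.ofReal_mul ε.coe_nonneg]
      exact (ENNReal.ofReal_le_ofReal hle).trans le_add_self
  have hbound : ∀ᶠ i in F, ∫⁻ x, ENNReal.ofReal (f x) ∂m i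
      ≤ ∫⁻ x, ENNReal.ofReal (φ x) ∂m i + ε * M := by
    filter_upwards [hM] with i hi
    refine (lintegral_mono hsplit).trans ?_
    rw [lintegral_add_left (f := fun x => ENNReal.ofReal (φ x))
      φ.continuous.measurable.ennreal_ofReal, lintegral_const_mul' _ _ ENNReal.coe_ne_top]
    gcongr
  calc limsup (fun i => ∫⁻ x, ENNReal.ofReal (f x) ∂m i) F
      ≤ limsup (fun i => ∫⁻ x, ENNReal.ofReal (φ x) ∂m i + ε * M) F := limsup_le_limsup hbound
    _ = ∫⁻ x, ENNReal.ofReal (φ x) ∂ν + ε * M :=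
        ((h.lintegral_ofReal hm fun x => (hφ x).1).add_const _).limsup_eq
    _ ≤ ∫⁻ x, ENNReal.ofReal (f x) ∂ν + ε * M := by
        gcongr with x
        exact (hφ x).2

variable [SigmaCompactSpace X]

theorem lintegral_le_liminf (h : VagueTendsto m F ν)
    (hm : ∀ᶠ i in F, IsFiniteMeasureOnCompacts (m i)) (hf : Continuous f) (hf0 : ∀ x, 0 ≤ f x) :
    ∫⁻ x, ENNReal.ofReal (f x) ∂ν ≤ liminf (fun i => ∫⁻ x, ENNReal.ofReal (f x) ∂m i) F := by
  rw [← setLIntegral_univ, ← iUnion_compactCovering X, setLIntegral_iUnion_of_directed _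
    (Monotone.directed_le (compactCovering_subset X))]
  refine iSup_le fun n => ?_
  obtain ⟨φ, hφf, hφ⟩ := exists_compactlySupported_eqOn hf hf0 (isCompact_compactCovering X n)
  calc ∫⁻ x in compactCovering X n, ENNReal.ofReal (f x) ∂ν
      = ∫⁻ x in compactCovering X n, ENNReal.ofReal (φ x) ∂ν :=
        setLIntegral_congr_fun (isCompact_compactCovering X n).measurableSet
          fun x hx => by simp only [hφf hx]
    _ ≤ ∫⁻ x, ENNReal.ofReal (φ x) ∂ν := setLIntegral_le_lintegral _ _
    _ = liminf (fun i => ∫⁻ x, ENNReal.ofReal (φ x) ∂m i) F :=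
        (h.lintegral_ofReal hm fun x => (hφ x).1).liminf_eq.symm
    _ ≤ liminf (fun i => ∫⁻ x, ENNReal.ofReal (f x) ∂m i) F :=
        liminf_le_liminf (Eventually.of_forall fun i => lintegral_mono fun x =>
          ENNReal.ofReal_le_ofReal (hφ x).2)

theorem lintegral_of_isLittleO (h : VagueTendsto m F ν)
    (hm : ∀ᶠ i in F, IsFiniteMeasureOnCompacts (m i)) (hf : Continuous f) (hf0 : ∀ x, 0 ≤ f x)
    (hg0 : ∀ x, 0 ≤ g x) (hfg : f =o[cocompact X] g) {M : ℝ≥0}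
    (hM : ∀ᶠ i in F, ∫⁻ x, ENNReal.ofReal (g x) ∂m i ≤ M) :
    Tendsto (fun i => ∫⁻ x, ENNReal.ofReal (f x) ∂m i) F (𝓝 (∫⁻ x, ENNReal.ofReal (f x) ∂ν)) := by
  refine tendsto_of_le_liminf_of_limsup_le (h.lintegral_le_liminf hm hf hf0) ?_
  have hlim : Tendsto (fun ε : ℝ≥0 => ∫⁻ x, ENNReal.ofReal (f x) ∂ν + ε * M) (𝓝[>] 0)
      (𝓝 (∫⁻ x, ENNReal.ofReal (f x) ∂ν + (0 : ℝ≥0) * M)) := by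
    refine Tendsto.mono_left ?_ nhdsWithin_le_nhds
    exact (ENNReal.Tendsto.mul_const (ENNReal.tendsto_coe.2 tendsto_id)
      (Or.inr ENNReal.coe_ne_top)).const_add _
  rw [ENNReal.coe_zero, zero_mul, add_zero] at hlim
  exact ge_of_tendsto hlim <| eventually_mem_nhdsWithin.mono fun ε hε =>
    h.limsup_lintegral_le_add hm hf hf0 hg0 hfg hM hε

end VagueTendsto

end VagueConvergence

section Kernel

variable {s t x y θ : ℝ}

theorem rTheta_pos : 0 < rTheta θ t x := Real.exp_pos _

theorem continuous_rTheta : Continuous fun θ => rTheta θ t x := by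
  unfold rTheta
  fun_prop

theorem rTheta_eq_exp_mul (s y : ℝ) :
    rTheta θ t x = Real.exp (-((1 / t - 1 / s) / 2) * θ ^ 2 + (x / t - y / s) * θ)
      * rTheta θ s y := by
  rw [rTheta, rTheta, ← Real.exp_add]
  ring_nf

theorem isLittleO_exp_quadratic_one {a : ℝ} (ha : a < 0) (c : ℝ) :
    (fun θ => Real.exp (a * θ ^ 2 + c * θ)) =o[cocompact ℝ] fun _ => (1 : ℝ) := by
  have h := (cexp_neg_quadratic_isLittleO_abs_rpow_cocompact
    (show (a : ℂ).re < 0 from ha) c 0).norm_left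
  simpa [Complex.norm_exp, ← Complex.ofReal_pow] using h

theorem isLittleO_rTheta (ht : 0 < t) (hts : t < s) (x y : ℝ) :
    (fun θ => rTheta θ t x) =o[cocompact ℝ] fun θ => rTheta θ s y := by
  have ha : -((1 / t - 1 / s) / 2) < 0 := by linarith [one_div_lt_one_div_of_lt ht hts]
  have h := (isLittleO_exp_quadratic_one ha (x / t - y / s)).mul_isBigO
    (isBigO_refl (fun θ => rTheta θ s y) (cocompact ℝ))
  simpa only [← rTheta_eq_exp_mul, one_mul] using h

-- Complete the square in `θ` after factoring out `r_θ(s, y)`.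
theorem rTheta_le_exp_mul (ht : 0 < t) (hts : t < s) {K : ℝ}
    (hK : (x / t - y / s) ^ 2 ≤ 2 * K * (1 / t - 1 / s)) :
    rTheta θ t x ≤ Real.exp K * rTheta θ s y := by
  rw [rTheta_eq_exp_mul s y]
  refine mul_le_mul_of_nonneg_right (Real.exp_le_exp.2 ?_) rTheta_pos.le
  have hδ : 0 < 1 / t - 1 / s := by linarith [one_div_lt_one_div_of_lt ht hts]
  set δ := 1 / t - 1 / s
  set c := x / t - y / s
  have hsq : 0 ≤ (δ * θ - c) ^ 2 := sq_nonneg _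
  refine le_of_mul_le_mul_left ?_ (mul_pos two_pos hδ)
  linarith

variable {b : ℝ → ℝ}

theorem isBigO_sub_sqrt_of_differentiableAt (hb : DifferentiableAt ℝ b s) :
    (fun t => b t - b s) =O[𝓝[<] s] fun t => √(s - t) := by
  have hlip : (fun t => b t - b s) =O[𝓝[<] s] fun t => s - t :=
    (hb.isBigO_sub.mono nhdsWithin_le_nhds).trans
      (.of_norm_left <| by
        simpa only [norm_sub_rev] using (isBigO_refl (fun t => s - t) _).norm_left)
  have hbdd : (fun t => √(s - t)) =O[𝓝[<] s] fun _ => (1 : ℝ) :=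
    (Continuous.tendsto (by fun_prop) s).isBigO_one ℝ |>.mono nhdsWithin_le_nhds
  refine hlip.trans ((hbdd.mul (isBigO_refl (fun t => √(s - t)) _)).congr' ?_ ?_)
  · filter_upwards [self_mem_nhdsWithin] with t ht
    exact Real.mul_self_sqrt (sub_nonneg.2 (le_of_lt ht))
  · simp

theorem isBigO_sq_div_sub_div (hs : 0 < s)
    (hb : (fun t => b t - b s) =O[𝓝[<] s] fun t => √(s - t)) :
    (fun t => (b t / t - b s / s) ^ 2) =O[𝓝[<] s] fun t => 1 / t - 1 / s := by
  have hinv : (fun t : ℝ => t⁻¹) =O[𝓝[<] s] fun _ => (1 : ℝ) :=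
    ((continuousAt_inv₀ hs.ne').tendsto.isBigO_one ℝ).mono nhdsWithin_le_nhds
  have hnum : (fun t => (b t - b s) * t⁻¹) =O[𝓝[<] s] fun t => √(s - t) := by
    simpa using hb.mul hinv
  have hden : (fun t => b s / t - b s / s) =O[𝓝[<] s] fun t => √(s - t) :=
    isBigO_sub_sqrt_of_differentiableAt (by fun_prop (disch := exact hs.ne'))
  have hmul : (fun t => t * s) =O[𝓝[<] s] fun _ => (1 : ℝ) :=
    ((Continuous.tendsto (by fun_prop) s).isBigO_one ℝ).mono nhdsWithin_le_nhds
  have hgap : (fun t => √(s - t) ^ 2) =O[𝓝[<] s] fun t => 1 / t - 1 / s := by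
    refine (hmul.mul (isBigO_refl (fun t => 1 / t - 1 / s) _)).congr' ?_ (by simp)
    filter_upwards [Ioo_mem_nhdsLT hs] with t ht
    have ht0 : t ≠ 0 := ht.1.ne'
    rw [Real.sq_sqrt (sub_nonneg.2 ht.2.le)]
    field_simp
  refine (((hnum.add hden).pow 2).congr_left fun t => ?_).trans hgap
  ring

theorem exists_eventually_rTheta_le_mul (hs : 0 < s)
    (hb : (fun t => b t - b s) =O[𝓝[<] s] fun t => √(s - t)) :
    ∃ C, 0 < C ∧ ∀ᶠ t in 𝓝[<] s, ∀ θ, rTheta θ t (b t) ≤ C * rTheta θ s (b s) := by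
  obtain ⟨K, hK⟩ := (isBigO_sq_div_sub_div hs hb).bound
  refine ⟨Real.exp (K / 2), Real.exp_pos _, ?_⟩
  filter_upwards [hK, Ioo_mem_nhdsLT hs] with t htK ht θ
  refine rTheta_le_exp_mul ht.1 ht.2 ?_
  have hδ : 0 ≤ 1 / t - 1 / s := sub_nonneg.2 (one_div_le_one_div_of_le ht.1 ht.2.le)
  rw [Real.norm_of_nonneg (sq_nonneg _), Real.norm_of_nonneg hδ] at htK
  linarith

theorem tendsto_rMu_nhdsLT (hs : 0 < s)
    (hb : (fun t => b t - b s) =O[𝓝[<] s] fun t => √(s - t)) {ν : Measure ℝ}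
    (hν : rMu ν s (b s) ≠ ⊤) :
    Tendsto (fun t => rMu ν t (b t)) (𝓝[<] s) (𝓝 (rMu ν s (b s))) := by
  have hbs : Tendsto b (𝓝[<] s) (𝓝 (b s)) := by
    refine tendsto_sub_nhds_zero_iff.1 (hb.trans_tendsto ?_)
    exact ((Continuous.tendsto' (by fun_prop) s 0 (by simp)).mono_left nhdsWithin_le_nhds)
  have hid : Tendsto (fun t => t) (𝓝[<] s) (𝓝 s) := nhdsWithin_le_nhds
  have hpt (θ : ℝ) : Tendsto (fun t => rTheta θ t (b t)) (𝓝[<] s) (𝓝 (rTheta θ s (b s))) :=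
    (Real.continuous_exp.tendsto _).comp <|
      (tendsto_const_nhds.div (hid.const_mul 2) (by positivity)).add
        ((hbs.const_mul θ).div hid hs.ne')
  obtain ⟨C, hC, hdom⟩ := exists_eventually_rTheta_le_mul hs hb
  refine tendsto_lintegral_filter_of_dominated_convergence
    (fun θ => ENNReal.ofReal C * ENNReal.ofReal (rTheta θ s (b s)))
    (.of_forall fun t => continuous_rTheta.measurable.ennreal_ofReal) ?_ ?_
    (ae_of_all _ fun θ => ENNReal.tendsto_ofReal (hpt θ))
  · filter_upwards [hdom] with t ht
    refine ae_of_all _ fun θ => ?_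
    rw [← ENNReal.ofReal_mul hC.le]
    exact ENNReal.ofReal_le_ofReal (ht θ)
  · rw [lintegral_const_mul' _ _ ENNReal.ofReal_ne_top]
    exact ENNReal.mul_ne_top ENNReal.ofReal_ne_top hν

theorem one_le_rMu_of_forall_lt (hs : 0 < s)
    (hb : (fun t => b t - b s) =O[𝓝[<] s] fun t => √(s - t)) {ν : Measure ℝ}
    (hν : ∀ t ∈ Ioo 0 s, 1 ≤ rMu ν t (b t)) : 1 ≤ rMu ν s (b s) := by
  by_cases htop : rMu ν s (b s) = ⊤
  · exact htop ▸ le_top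
  · exact ge_of_tendsto (tendsto_rMu_nhdsLT hs hb htop) <|
      mem_of_superset (Ioo_mem_nhdsLT hs) hν

end Kernel

section Programs

attribute [local instance] vagueTop

variable {ι : Type*} {m : ι → Measure ℝ} {F : Filter ι} {μ ν : Measure ℝ} {b : ℝ → ℝ}
  {t0 x0 : ℝ} {U V : Set (Measure ℝ)} {μs : ℕ → Measure ℝ} {M : ℝ≥0}

theorem tendsto_nhds_vagueTop_iff : Tendsto m F (𝓝 ν) ↔ VagueTendsto m F ν := by
  unfold vagueTop
  simp only [nhds_iInf, nhds_induced, tendsto_iInf, tendsto_comap_iff]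
  exact ⟨fun h φ => h φ φ.continuous φ.hasCompactSupport, fun h f hf hfc => h ⟨⟨f, hf⟩, hfc⟩⟩

theorem isFiniteMeasureOnCompacts_of_gInt_le (h : gInt t0 x0 μ ≤ M) :
    IsFiniteMeasureOnCompacts μ :=
  isFiniteMeasureOnCompacts_of_lintegral_ne_top continuous_rTheta (fun _ => rTheta_pos)
    (ne_top_of_le_ne_top ENNReal.coe_ne_top h)

theorem gInt_le_liminf [F.NeBot] [IsFiniteMeasureOnCompacts ν] (h : Tendsto m F (𝓝 ν))
    (hm : ∀ᶠ i in F, IsFiniteMeasureOnCompacts (m i)) :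
    gInt t0 x0 ν ≤ liminf (fun i => gInt t0 x0 (m i)) F :=
  (tendsto_nhds_vagueTop_iff.1 h).lintegral_le_liminf hm continuous_rTheta fun _ => rTheta_pos.le

-- Restricting the domain is essential: the Bochner integrals defining `vagueTop` take the junk
-- value `0` when they diverge, so other measures may be vague limits of unrelated ones.
theorem lowerSemicontinuousOn_gInt :
    LowerSemicontinuousOn (gInt t0 x0) {μ | IsFiniteMeasureOnCompacts μ} := by
  intro ν (hν : IsFiniteMeasureOnCompacts ν)
  have := nhdsWithin_neBot_of_mem (s := {μ | IsFiniteMeasureOnCompacts μ}) hν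
  exact lowerSemicontinuousWithinAt_iff_le_liminf.2 <|
    gInt_le_liminf (tendsto_id.mono_left nhdsWithin_le_nhds) eventually_mem_nhdsWithin

theorem gInt_le_of_tendsto [F.NeBot] [IsFiniteMeasureOnCompacts ν] (h : Tendsto m F (𝓝 ν))
    (hM : ∀ᶠ i in F, gInt t0 x0 (m i) ≤ M) : gInt t0 x0 ν ≤ M :=
  (gInt_le_liminf h <| hM.mono fun _ => isFiniteMeasureOnCompacts_of_gInt_le).trans
    (liminf_le_of_frequently_le' hM.frequently)

theorem isCompact_setOf_gInt_le : IsCompact {μ | gInt t0 x0 μ ≤ M} := by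
  refine isCompact_iff_ultrafilter_le_nhds'.2 fun F hF => ?_
  obtain ⟨ν, hν, hFν⟩ := exists_vagueTendsto_of_lintegral_le (m := id) continuous_rTheta
    (fun _ => rTheta_pos) F hF
  have hlim := tendsto_nhds_vagueTop_iff.2 hFν
  exact ⟨ν, gInt_le_of_tendsto hlim hF, hlim⟩

theorem continuousOn_rMu {t : ℝ} (ht : 0 < t) (htt0 : t < t0) (x : ℝ) :
    ContinuousOn (fun μ => rMu μ t x) {μ | gInt t0 x0 μ ≤ M} := by
  intro ν hν
  have := isFiniteMeasureOnCompacts_of_gInt_le hν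
  have := nhdsWithin_neBot_of_mem hν
  have hlim : VagueTendsto id (𝓝[{μ | gInt t0 x0 μ ≤ M}] ν) ν :=
    tendsto_nhds_vagueTop_iff.1 (tendsto_id.mono_left nhdsWithin_le_nhds)
  exact hlim.lintegral_of_isLittleO
    (eventually_mem_nhdsWithin.mono fun _ => isFiniteMeasureOnCompacts_of_gInt_le)
    continuous_rTheta (fun _ => rTheta_pos.le) (fun _ => rTheta_pos.le)
    (isLittleO_rTheta ht htt0 x x0) eventually_mem_nhdsWithin

theorem isCompact_feasSet (ht0 : 0 < t0)
    (hb : (fun t => b t - b t0) =O[𝓝[<] t0] fun t => √(t0 - t)) (hU : IsCompact U)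
    (hUM : U ⊆ {μ | gInt t0 x0 μ ≤ M}) : IsCompact (feasSet b t0 U) := by
  refine isCompact_iff_ultrafilter_le_nhds'.2 fun F hF => ?_
  have hFU : U ∈ F := mem_of_superset hF (sep_subset _ _)
  obtain ⟨ν, hνU, hFν⟩ := hU.ultrafilter_le_nhds' F hFU
  have hFν' : (F : Filter (Measure ℝ)) ≤ 𝓝[{μ | gInt t0 x0 μ ≤ M}] ν :=
    le_inf hFν (le_principal_iff.2 (mem_of_superset hFU hUM))
  have hlt : ∀ t ∈ Ioo 0 t0, 1 ≤ rMu ν t (b t) := fun t ht =>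
    ge_of_tendsto ((continuousOn_rMu ht.1 ht.2 (b t) ν (hUM hνU)).mono_left hFν') <|
      mem_of_superset hF fun μ hμ => hμ.2 t ⟨ht.1, ht.2.le⟩
  refine ⟨ν, ⟨hνU, fun t ht => ?_⟩, hFν⟩
  rcases ht.2.lt_or_eq with h | rfl
  · exact hlt t ⟨ht.1, h⟩
  · exact one_le_rMu_of_forall_lt ht0 hb hlt

theorem feasSet_mono (h : U ⊆ V) : feasSet b t0 U ⊆ feasSet b t0 V := fun _ hμ => ⟨h hμ.1, hμ.2⟩

theorem pVal_anti (h : U ⊆ V) : pVal b t0 x0 V ≤ pVal b t0 x0 U := biInf_mono (feasSet_mono h)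

theorem exists_gInt_eq_pVal (ht0 : 0 < t0)
    (hb : (fun t => b t - b t0) =O[𝓝[<] t0] fun t => √(t0 - t))
    (hU : ∀ M : ℝ≥0, IsCompact (U ∩ {μ | gInt t0 x0 μ ≤ M})) (hne : (feasSet b t0 U).Nonempty) :
    ∃ μ ∈ feasSet b t0 U, gInt t0 x0 μ = pVal b t0 x0 U := by
  obtain ⟨μ₀, hμ₀⟩ := hne
  by_cases htop : pVal b t0 x0 U = ⊤
  · exact ⟨μ₀, hμ₀, le_antisymm (htop ▸ le_top) (iInf₂_le _ hμ₀)⟩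
  obtain ⟨μ₁, hμ₁, hlt⟩ : ∃ μ ∈ feasSet b t0 U, gInt t0 x0 μ < ⊤ := by
    simpa only [pVal, ← lt_top_iff_ne_top, iInf_lt_iff, exists_prop] using htop
  lift gInt t0 x0 μ₁ to ℝ≥0 using hlt.ne with M hM
  set S := feasSet b t0 (U ∩ {μ | gInt t0 x0 μ ≤ M})
  have hS : IsCompact S := isCompact_feasSet ht0 hb (hU M) inter_subset_right
  have hne : S.Nonempty := ⟨μ₁, ⟨hμ₁.1, hM.ge⟩, hμ₁.2⟩
  have hlsc : LowerSemicontinuousOn (gInt t0 x0) S :=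
    lowerSemicontinuousOn_gInt.mono fun μ hμ => isFiniteMeasureOnCompacts_of_gInt_le hμ.1.2
  obtain ⟨μ, hμ, hmin⟩ := hlsc.exists_isMinOn hne hS
  have hμU : μ ∈ feasSet b t0 U := feasSet_mono inter_subset_left hμ
  refine ⟨μ, hμU, le_antisymm (le_iInf₂ fun ν hν => ?_) (iInf₂_le μ hμU)⟩
  rcases le_total (gInt t0 x0 ν) M with hle | hge
  · exact hmin ⟨⟨hν.1, hle⟩, hν.2⟩
  · exact hμ.1.2.trans hge

theorem continuous_sum_smul [∀ i, IsFiniteMeasureOnCompacts (μs i)] (n : ℕ) :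
    Continuous fun a : ℕ → ℝ≥0 => ∑ i ∈ Finset.range n, a i • μs i := by
  refine continuous_iff_continuousAt.2 fun a => tendsto_nhds_vagueTop_iff.2 fun φ => ?_
  have hsum (a : ℕ → ℝ≥0) : ∫ x, φ x ∂(∑ i ∈ Finset.range n, a i • μs i)
      = ∑ i ∈ Finset.range n, a i • ∫ x, φ x ∂μs i := by
    rw [integral_finsetSum_measure fun i _ => φ.integrable]
    simp only [integral_smul_nnreal_measure]
  simp only [hsum]
  exact Continuous.tendsto (by fun_prop) a

theorem eq_zero_of_gInt_eq_zero (h : gInt t0 x0 μ = 0) : μ = 0 := by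
  rw [gInt, lintegral_eq_zero_iff continuous_rTheta.measurable.ennreal_ofReal] at h
  refine ae_eq_bot.1 (eventually_false_iff_eq_bot.1 <| h.mono fun θ hθ => ?_)
  exact (ENNReal.ofReal_pos.2 rTheta_pos).ne' hθ

theorem gInt_smul (c : ℝ≥0) : gInt t0 x0 (c • μ) = c * gInt t0 x0 μ :=
  lintegral_smul_measure c _

theorem gInt_sum_smul (a : ℕ → ℝ≥0) (n : ℕ) :
    gInt t0 x0 (∑ i ∈ Finset.range n, a i • μs i)
      = ∑ i ∈ Finset.range n, a i * gInt t0 x0 (μs i) :=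
  (lintegral_finsetSum_measure _ _ _).trans <| Finset.sum_congr rfl fun i _ => gInt_smul (a i)

-- When `gInt t0 x0 μ = 0` the bound is `(M / 0).toNNReal = 0`, and `μ = 0`.
theorem min_smul_eq_smul_of_mul_gInt_le {a : ℝ≥0} (h : a * gInt t0 x0 μ ≤ M) :
    min a (M / gInt t0 x0 μ).toNNReal • μ = a • μ := by
  by_cases hμ : gInt t0 x0 μ = 0
  · rw [eq_zero_of_gInt_eq_zero hμ, smul_zero, smul_zero]
  · rw [min_eq_left]
    rw [← ENNReal.coe_le_coe, ENNReal.coe_toNNReal (ENNReal.div_ne_top ENNReal.coe_ne_top hμ)]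
    exact (ENNReal.le_div_iff_mul_le (.inl hμ) (.inr ENNReal.coe_ne_top)).2 h

theorem isFiniteMeasureOnCompacts_sum_smul [∀ i, IsFiniteMeasureOnCompacts (μs i)]
    (a : ℕ → ℝ≥0) (n : ℕ) :
    IsFiniteMeasureOnCompacts (∑ i ∈ Finset.range n, a i • μs i) := by
  refine ⟨fun K hK => ?_⟩
  rw [Measure.finsetSum_apply, ENNReal.sum_lt_top]
  exact fun i _ => ENNReal.mul_lt_top ENNReal.coe_lt_top hK.measure_lt_top

theorem isCompact_coneU_inter_setOf_gInt_le [∀ i, IsFiniteMeasureOnCompacts (μs i)] (n : ℕ) :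
    IsCompact (coneU μs n ∩ {μ | gInt t0 x0 μ ≤ M}) := by
  let box : Set (ℕ → ℝ≥0) := univ.pi fun i => Icc 0 (M / gInt t0 x0 (μs i)).toNNReal
  have hbox : IsCompact ((fun a : ℕ → ℝ≥0 => ∑ i ∈ Finset.range n, a i • μs i) '' box) :=
    (isCompact_univ_pi fun _ => isCompact_Icc).image (continuous_sum_smul n)
  have hsub : coneU μs n ∩ {μ | gInt t0 x0 μ ≤ M}
      ⊆ (fun a : ℕ → ℝ≥0 => ∑ i ∈ Finset.range n, a i • μs i) '' box := by
    rintro _ ⟨⟨a, rfl⟩, hM⟩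
    refine ⟨fun i => min (a i) (M / gInt t0 x0 (μs i)).toNNReal,
      fun i _ => ⟨zero_le, min_le_right _ _⟩, Finset.sum_congr rfl fun i hi => ?_⟩
    refine min_smul_eq_smul_of_mul_gInt_le (le_trans ?_ ((gInt_sum_smul a n).ge.trans hM))
    exact Finset.single_le_sum (f := fun i => (a i : ℝ≥0∞) * gInt t0 x0 (μs i))
      (fun _ _ => zero_le) hi
  refine isCompact_iff_ultrafilter_le_nhds'.2 fun F hF => ?_
  obtain ⟨_, ⟨a, -, rfl⟩, hlim⟩ := hbox.ultrafilter_le_nhds' F (mem_of_superset hF hsub)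
  have := isFiniteMeasureOnCompacts_sum_smul (μs := μs) a n
  exact ⟨_, ⟨⟨a, rfl⟩, gInt_le_of_tendsto hlim (mem_of_superset hF inter_subset_right)⟩, hlim⟩

theorem isCompact_coneUInf_inter_setOf_gInt_le :
    IsCompact (coneUInf μs ∩ {μ | gInt t0 x0 μ ≤ M}) :=
  isCompact_setOf_gInt_le.inter_left isClosed_closure

theorem coneU_mono : Monotone (coneU μs) := by
  rintro m n hmn _ ⟨a, rfl⟩
  refine ⟨fun i => if i < m then a i else 0, ?_⟩
  dsimp only
  rw [← Finset.sum_subset (Finset.range_mono hmn)]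
  · exact Finset.sum_congr rfl fun i hi => by rw [if_pos (Finset.mem_range.1 hi)]
  · intro i _ hi
    rw [if_neg (mt Finset.mem_range.2 hi), zero_smul]

theorem smul_mem_coneU (c : ℝ≥0) {n : ℕ} (hn : 1 ≤ n) : c • μs 0 ∈ coneU μs n :=
  coneU_mono hn ⟨fun _ => c, by rw [Finset.sum_range_one]⟩

theorem coneU_subset_coneUInf (n : ℕ) : coneU μs n ⊆ coneUInf μs :=
  (subset_iUnion (coneU μs) n).trans subset_closure

theorem pVal_le_mul_gInt {c : ℝ≥0} (h : c • μ ∈ feasSet b t0 U) :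
    pVal b t0 x0 U ≤ c * gInt t0 x0 μ :=
  (iInf₂_le _ h).trans_eq (gInt_smul c)

end Programs

theorem stmt_16_general (b : ℝ → ℝ) (t0 x0 : ℝ) (ht0 : 0 < t0)
    (hb : (fun t => b t - b t0) =O[𝓝[<] t0] fun t => √(t0 - t))
    (μs : ℕ → Measure ℝ) [∀ i, IsFiniteMeasureOnCompacts (μs i)]
    (C : ℝ≥0) (hCfeas : ∀ t ∈ Ioc 0 t0, 1 ≤ rMu (C • μs 0) t (b t)) :
    (∀ n : ℕ, 1 ≤ n →
      (∃ μ ∈ feasSet b t0 (coneU μs n), gInt t0 x0 μ = pVal b t0 x0 (coneU μs n)) ∧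
      pVal b t0 x0 (coneU μs n) ≤ C * gInt t0 x0 (μs 0)) ∧
    ((∃ μ ∈ feasSet b t0 (coneUInf μs), gInt t0 x0 μ = pVal b t0 x0 (coneUInf μs)) ∧
      pVal b t0 x0 (coneUInf μs) ≤ C * gInt t0 x0 (μs 0)) ∧
    (∀ m n : ℕ, m ≤ n → feasSet b t0 (coneU μs m) ⊆ feasSet b t0 (coneU μs n) ∧
      pVal b t0 x0 (coneU μs n) ≤ pVal b t0 x0 (coneU μs m)) ∧
    (∀ m : ℕ, feasSet b t0 (coneU μs m) ⊆ feasSet b t0 (coneUInf μs) ∧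
      pVal b t0 x0 (coneUInf μs) ≤ pVal b t0 x0 (coneU μs m)) := by
  have hfeas {n : ℕ} (hn : 1 ≤ n) : C • μs 0 ∈ feasSet b t0 (coneU μs n) :=
    ⟨smul_mem_coneU C hn, hCfeas⟩
  have hfeasInf : C • μs 0 ∈ feasSet b t0 (coneUInf μs) :=
    feasSet_mono (coneU_subset_coneUInf 1) (hfeas le_rfl)
  refine ⟨fun n hn => ⟨?_, pVal_le_mul_gInt (hfeas hn)⟩, ⟨?_, pVal_le_mul_gInt hfeasInf⟩,
    fun m n hmn => ⟨feasSet_mono (coneU_mono hmn), pVal_anti (coneU_mono hmn)⟩,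
    fun m => ⟨feasSet_mono (coneU_subset_coneUInf m), pVal_anti (coneU_subset_coneUInf m)⟩⟩
  · exact exists_gInt_eq_pVal ht0 hb (fun _ => isCompact_coneU_inter_setOf_gInt_le n)
      ⟨_, hfeas hn⟩
  · exact exists_gInt_eq_pVal ht0 hb (fun _ => isCompact_coneUInf_inter_setOf_gInt_le)
      ⟨_, hfeasInf⟩

theorem stmt_16 (b : ℝ → ℝ)
    (hba : AnalyticOnNhd ℝ b (Set.Ici 0)) (hbconc : ConcaveOn ℝ (Set.Ici 0) b)
    (hb0 : 0 < b 0) (hbderiv : ∃ d : ℝ, HasDerivWithinAt b d (Set.Ici 0) 0)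
    (t0 x0 : ℝ) (ht0 : 0 < t0) (hx0 : x0 < b t0)
    (μs : ℕ → Measure ℝ) (hfin : ∀ i, IsFiniteMeasure (μs i))
    (hsupp : ∀ i, μs i (Set.Ici (2 * b 0))ᶜ = 0)
    (C : ℝ≥0) (hC : 0 < C)
    (hCfeas : ∀ t ∈ Set.Ioc 0 t0, 1 ≤ rMu (C • μs 0) t (b t)) :
    -- existence of optimisers and the bound, for each `n ≥ 1` …
    (∀ n : ℕ, 1 ≤ n →
      (∃ μstar ∈ feasSet b t0 (coneU μs n),
        gInt t0 x0 μstar = pVal b t0 x0 (coneU μs n)) ∧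
      pVal b t0 x0 (coneU μs n) ≤ (C : ℝ≥0∞) * gInt t0 x0 (μs 0)) ∧
    -- … and for `n = ∞`
    ((∃ μstar ∈ feasSet b t0 (coneUInf μs),
        gInt t0 x0 μstar = pVal b t0 x0 (coneUInf μs)) ∧
      pVal b t0 x0 (coneUInf μs) ≤ (C : ℝ≥0∞) * gInt t0 x0 (μs 0)) ∧
    -- monotonicity: each optimiser of the `m`-th program is feasible for the
    -- `n`-th program when `m ≤ n`, and the optimal values decrease
    (∀ m n : ℕ, 1 ≤ m → m ≤ n →
      (∀ μstar ∈ feasSet b t0 (coneU μs m),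
        gInt t0 x0 μstar = pVal b t0 x0 (coneU μs m) →
          μstar ∈ feasSet b t0 (coneU μs n)) ∧
      pVal b t0 x0 (coneU μs n) ≤ pVal b t0 x0 (coneU μs m)) := by
  obtain ⟨hn, hInf, hmono, -⟩ := stmt_16_general b t0 x0 ht0
    (isBigO_sub_sqrt_of_differentiableAt (hba t0 ht0.le).differentiableAt) μs C hCfeas
  exact ⟨hn, hInf, fun m n _ hmn => ⟨fun _ hμ _ => (hmono m n hmn).1 hμ, (hmono m n hmn).2⟩⟩
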